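/- Let f(z) = Σ_α a(α) z^α ∈ ℝ[z1,...,zn] be a real stable polynomial of total degree at most d with non-negative coefficients, and for 0 ≤ k ≤ d let E_k(z) = Σ_{|α|=k} a(α) z^α. Then for all z ∈ ℝ^n with non-negative coordinates and 1 ≤ k ≤ d−1: (E_k(z)/C(d,k))^2 ≥ (E_{k−1}(z)/C(d,k−1)) · (E_{k+1}(z)/C(d,k+1)), where C(d,k) denotes the binomial coefficient. -/

import Mathlib

open MvPolynomial

lemma newton_one (d : ℕ) : ∀ p : Polynomial ℝ, p.Splits → p.natDegree ≤ d →
    2 * (d : ℝ) * (p.coeff 0 * p.coeff 2) ≤ ((d : ℝ) - 1) * (p.coeff 1) ^ 2 := by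
  induction d with
  | zero =>
    intro p hp hd
    have h1 : p.coeff 1 = 0 := Polynomial.coeff_eq_zero_of_natDegree_lt (by omega)
    simp [h1]
  | succ d ih =>
    intro p hp hd
    by_cases h0 : p.natDegree = 0
    · have h1 : p.coeff 1 = 0 := Polynomial.coeff_eq_zero_of_natDegree_lt (by omega)
      have h2 : p.coeff 2 = 0 := Polynomial.coeff_eq_zero_of_natDegree_lt (by omega)
      simp [h1, h2]
    · obtain ⟨r, hr⟩ := hp.exists_eval_eq_zero (by
        intro h
        exact h0 (Polynomial.natDegree_eq_of_degree_eq_some h))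
      obtain ⟨q, rfl⟩ := Polynomial.dvd_iff_isRoot.mpr hr
      have hqs : q.Splits := Polynomial.splits_X_sub_C_mul_iff.mp hp
      have hq0 : q ≠ 0 := by
        rintro rfl
        simp at h0
      have hqd : q.natDegree ≤ d := by
        rw [Polynomial.natDegree_mul (Polynomial.X_sub_C_ne_zero r) hq0,
          Polynomial.natDegree_X_sub_C] at hd
        omega
      have key := ih q hqs hqd
      have e0 : ((Polynomial.X - Polynomial.C r) * q).coeff 0 = - r * q.coeff 0 := by
        simp [sub_mul]
      have e1 : ((Polynomial.X - Polynomial.C r) * q).coeff 1 = q.coeff 0 - r * q.coeff 1 := by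
        simp [sub_mul, Polynomial.coeff_X_mul q 0]
      have e2 : ((Polynomial.X - Polynomial.C r) * q).coeff 2 = q.coeff 1 - r * q.coeff 2 := by
        simp [sub_mul, Polynomial.coeff_X_mul q 1]
      rw [e0, e1, e2]
      push_cast
      rcases Nat.eq_zero_or_pos d with rfl | hdpos
      · have h1 : q.coeff 1 = 0 := Polynomial.coeff_eq_zero_of_natDegree_lt (by omega)
        have h2 : q.coeff 2 = 0 := Polynomial.coeff_eq_zero_of_natDegree_lt (by omega)
        simp [h1, h2]
      · have hD : (0 : ℝ) < d := by exact_mod_cast hdpos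
        generalize q.coeff 0 = a at *
        generalize q.coeff 1 = b at *
        generalize q.coeff 2 = c at *
        generalize (d : ℝ) = D at *
        refine le_of_mul_le_mul_left ?_ hD
        have h3 : 0 ≤ (D + 1) * r ^ 2 * ((D - 1) * b ^ 2 - 2 * D * (a * c)) :=
          mul_nonneg (by positivity) (by linarith)
        nlinarith [sq_nonneg (r * b + D * a)]

lemma splits_deriv {p : Polynomial ℝ} (hp : p.Splits) : (Polynomial.derivative p).Splits := by
  by_cases h0 : p.natDegree = 0
  · rw [Polynomial.eq_C_of_natDegree_eq_zero h0]
    simp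
  rw [Polynomial.splits_iff_card_roots] at hp ⊢
  have h1 := Polynomial.card_roots_le_derivative p
  have h2 := Polynomial.card_roots' (Polynomial.derivative p)
  have h3 := Polynomial.natDegree_derivative_lt h0
  omega

lemma newton_gen (k : ℕ) : ∀ (d : ℕ) (p : Polynomial ℝ), p.Splits → p.natDegree ≤ d →
    k + 2 ≤ d →
    (p.coeff k / (d.choose k : ℝ)) * (p.coeff (k + 2) / (d.choose (k + 2) : ℝ)) ≤
      (p.coeff (k + 1) / (d.choose (k + 1) : ℝ)) ^ 2 := by
  induction k with
  | zero =>
    intro d p hp hd hk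
    have h := newton_one d p hp hd
    have hD : (2 : ℝ) ≤ d := by exact_mod_cast hk
    simp only [Nat.choose_zero_right, zero_add, Nat.choose_one_right, Nat.cast_choose_two,
      Nat.cast_one, div_one, div_pow]
    have hD1 : (0 : ℝ) < (d : ℝ) - 1 := by linarith
    rw [← mul_div_assoc, div_le_div_iff₀ (by positivity) (by positivity)]
    have h3 := mul_le_mul_of_nonneg_left h (by positivity : (0 : ℝ) ≤ (d : ℝ) / 2)
    linarith
  | succ k ih =>
    intro d p hp hd hk
    obtain ⟨d, rfl⟩ : ∃ e, d = e + 1 := ⟨d - 1, by omega⟩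
    have hdd : (Polynomial.derivative p).natDegree ≤ d := by
      have := Polynomial.natDegree_derivative_le p
      omega
    have h := ih d _ (splits_deriv hp) hdd (by omega)
    have hc : ∀ j, j ≤ d → (Polynomial.derivative p).coeff j / (d.choose j : ℝ) =
        ((d : ℝ) + 1) * (p.coeff (j + 1) / ((d + 1).choose (j + 1) : ℝ)) := by
      intro j hj
      have h1 : (0 : ℝ) < d.choose j := by exact_mod_cast Nat.choose_pos hj
      have h2 : (0 : ℝ) < (d + 1).choose (j + 1) := by
        exact_mod_cast Nat.choose_pos (by omega : j + 1 ≤ d + 1)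
      have h3 : ((d : ℝ) + 1) * d.choose j = (d + 1).choose (j + 1) * ((j : ℝ) + 1) := by
        exact_mod_cast Nat.add_one_mul_choose_eq d j
      rw [Polynomial.coeff_derivative, ← mul_div_assoc, div_eq_div_iff h1.ne' h2.ne']
      linear_combination (- p.coeff (j + 1)) * h3
    rw [hc k (by omega), hc (k + 1) (by omega), hc (k + 2) (by omega)] at h
    have hD : (0 : ℝ) < ((d : ℝ) + 1) ^ 2 := by positivity
    refine le_of_mul_le_mul_left ?_ hD
    calc _ = _ := by ring
      _ ≤ _ := h
      _ = _ := by ring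

lemma splits_of_upper (p : Polynomial ℝ)
    (h : ∀ w : ℂ, 0 < w.im → Polynomial.aeval w p ≠ 0) : p.Splits := by
  refine Polynomial.Splits.of_splits_map (algebraMap ℝ ℂ) (IsAlgClosed.splits _) ?_
  intro w hw
  have hw0 : Polynomial.aeval w p = 0 := by
    have := (Polynomial.mem_roots'.mp hw).2
    rwa [Polynomial.IsRoot.def, Polynomial.eval_map_algebraMap] at this
  have him : w.im = 0 := by
    rcases lt_trichotomy w.im 0 with h1 | h1 | h1
    · exfalso
      refine h ((starRingEnd ℂ) w) (by simpa using h1) ?_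
      rw [Polynomial.aeval_conj, hw0, map_zero]
    · exact h1
    · exact absurd hw0 (h w h1)
  exact ⟨w.re, Complex.ext (by simp) (by simp [him])⟩

lemma eval_smul_hom {σ : Type*} {φ : MvPolynomial σ ℝ} {m : ℕ} (hφ : φ.IsHomogeneous m)
    (w : ℂ) (z : σ → ℝ) :
    MvPolynomial.aeval (fun i => w * (z i : ℂ)) φ = w ^ m * ((MvPolynomial.eval z φ : ℝ) : ℂ) := by
  rw [MvPolynomial.aeval_def, MvPolynomial.eval₂_eq, MvPolynomial.eval_eq, Complex.ofReal_sum,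
    Finset.mul_sum]
  refine Finset.sum_congr rfl fun a ha => ?_
  have hm : ∑ i ∈ a.support, a i = m := by
    have := hφ (MvPolynomial.mem_support_iff.mp ha)
    simpa [Finsupp.weight_apply, Finsupp.sum] using this
  simp only [mul_pow, Finset.prod_mul_distrib, Finset.prod_pow_eq_pow_sum, hm]
  push_cast
  simp only [Complex.coe_algebraMap]
  ring

lemma newton_pos (n d : ℕ) (f : MvPolynomial (Fin n) ℝ)
    (hdeg : f.totalDegree ≤ d)
    (hstable : ∀ z : Fin n → ℂ, (∀ i, 0 < (z i).im) →
      MvPolynomial.eval z (MvPolynomial.map (algebraMap ℝ ℂ) f) ≠ 0)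
    (z : Fin n → ℝ) (hz : ∀ i, 0 < z i) (k : ℕ) (hk : k + 2 ≤ d) :
      (MvPolynomial.eval z (MvPolynomial.homogeneousComponent k f) /
          (d.choose k : ℝ)) *
        (MvPolynomial.eval z (MvPolynomial.homogeneousComponent (k + 2) f) /
          (d.choose (k + 2) : ℝ)) ≤
      (MvPolynomial.eval z (MvPolynomial.homogeneousComponent (k + 1) f) /
        (d.choose (k + 1) : ℝ)) ^ 2 := by
  let p : Polynomial ℝ := ∑ i ∈ Finset.range (f.totalDegree + 1),
    Polynomial.monomial i (MvPolynomial.eval z (MvPolynomial.homogeneousComponent i f))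
  have hcoeff : ∀ j, p.coeff j = MvPolynomial.eval z (MvPolynomial.homogeneousComponent j f) := by
    intro j
    simp only [p, Polynomial.finsetSum_coeff, Polynomial.coeff_monomial]
    rw [Finset.sum_ite_eq']
    split_ifs with hj
    · rfl
    · rw [MvPolynomial.homogeneousComponent_eq_zero, map_zero]
      simpa using hj
  have hnat : p.natDegree ≤ d := by
    refine Polynomial.natDegree_sum_le_of_forall_le _ _ fun i hi => ?_
    refine (Polynomial.natDegree_monomial_le _).trans ?_
    rw [Finset.mem_range] at hi
    omega
  have hs : p.Splits := by
    refine splits_of_upper p fun w hw => ?_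
    have h1 := hstable (fun i => w * (z i : ℂ)) (fun i => by
      simpa using mul_pos hw (hz i))
    rw [MvPolynomial.eval_map, ← MvPolynomial.aeval_def] at h1
    convert h1 using 1
    conv_rhs => rw [← MvPolynomial.sum_homogeneousComponent f]
    simp only [p, map_sum]
    refine Finset.sum_congr rfl fun i _ => ?_
    rw [eval_smul_hom (MvPolynomial.homogeneousComponent_isHomogeneous i f),
      Polynomial.aeval_monomial, mul_comm]
    rfl
  simpa only [hcoeff] using newton_gen k d p hs hnat hk

/-- Generalized Newton inequalities: if `f ∈ ℝ[z₁,…,zₙ]` is real stable of total degree at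
most `d` with non-negative coefficients and `E_k` is its degree-`k` homogeneous part, then
for `z` with non-negative coordinates and `1 ≤ k ≤ d−1`:
`(E_k(z)/C(d,k))² ≥ (E_{k−1}(z)/C(d,k−1))·(E_{k+1}(z)/C(d,k+1))`. -/
theorem stmt9 (n d : ℕ) (f : MvPolynomial (Fin n) ℝ)
    (hdeg : f.totalDegree ≤ d)
    (hcoeff : ∀ α, 0 ≤ f.coeff α)
    (hstable : ∀ z : Fin n → ℂ, (∀ i, 0 < (z i).im) →
      MvPolynomial.eval z (MvPolynomial.map (algebraMap ℝ ℂ) f) ≠ 0) :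
    ∀ z : Fin n → ℝ, (∀ i, 0 ≤ z i) → ∀ k : ℕ, 1 ≤ k → k + 1 ≤ d →
      (MvPolynomial.eval z (MvPolynomial.homogeneousComponent (k - 1) f) /
          (d.choose (k - 1) : ℝ)) *
        (MvPolynomial.eval z (MvPolynomial.homogeneousComponent (k + 1) f) /
          (d.choose (k + 1) : ℝ)) ≤
      (MvPolynomial.eval z (MvPolynomial.homogeneousComponent k f) / (d.choose k : ℝ)) ^ 2 := by
  intro z hz k hk1 hk2
  obtain ⟨k, rfl⟩ : ∃ j, k = j + 1 := ⟨k - 1, by omega⟩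
  simp only [Nat.add_sub_cancel]
  have hc : ∀ j, Continuous fun e : ℝ => MvPolynomial.eval (fun i => z i + e)
      (MvPolynomial.homogeneousComponent j f) := fun j =>
    (MvPolynomial.continuous_eval _).comp (by fun_prop)
  have hmem : (0 : ℝ) ∈ closure (Set.Ioi (0 : ℝ)) := by simp
  have := closure_minimal (s := Set.Ioi (0 : ℝ)) (t := {e : ℝ |
      (MvPolynomial.eval (fun i => z i + e) (MvPolynomial.homogeneousComponent k f) /
          (d.choose k : ℝ)) *
        (MvPolynomial.eval (fun i => z i + e) (MvPolynomial.homogeneousComponent (k + 2) f) /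
          (d.choose (k + 2) : ℝ)) ≤
      (MvPolynomial.eval (fun i => z i + e) (MvPolynomial.homogeneousComponent (k + 1) f) /
        (d.choose (k + 1) : ℝ)) ^ 2})
    (fun e he => newton_pos n d f hdeg hstable _
      (fun i => add_pos_of_nonneg_of_pos (hz i) he) k (by omega))
    (isClosed_le (((hc _).div_const _).mul ((hc _).div_const _)) (((hc _).div_const _).pow 2)) hmem
  simpa only [Set.mem_ofPred_eq, add_zero] using this
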